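/- arXiv:1406.4852 — 2 statements merged into one kernel-verified Lean document; each statement's English description precedes it below -/
import Mathlib

section
/- Let M be a random variable and let A_1,…,A_n and a_1,…,a_n be (joint) random variables on the same probability space such that H(M | A_i, a_i) = 0 for every 1 ≤ i ≤ n, and H(a_j | A_i) = 0 for all 1 ≤ i < j ≤ n. If moreover H(a_n | a_1, …, a_{n−1}) = 0, then n·H(M) ≤ Σ_{i=1}^n H(A_i) + Σ_{i=1}^{n−1} H(a_i). -/
open Finset

/-- Shannon entropy (base 2) of a finitely-valued random variable `X` on a finite
probability space with mass function `P`. -/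
noncomputable def entH {Ω S : Type*} [Fintype Ω] (P : Ω → ℝ) (X : Ω → S) : ℝ :=
  letI := Classical.decEq S
  ∑ s ∈ Finset.univ.image X,
    -((∑ ω ∈ Finset.univ.filter (fun ω => X ω = s), P ω) *
       Real.logb 2 (∑ ω ∈ Finset.univ.filter (fun ω => X ω = s), P ω))

/-- Conditional entropy `H(X | Y) = H(X, Y) - H(Y)`. -/
noncomputable def condH {Ω S T : Type*} [Fintype Ω] (P : Ω → ℝ) (X : Ω → S) (Y : Ω → T) : ℝ :=
  entH P (fun ω => (X ω, Y ω)) - entH P Y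

/-- The joint random variable `W_J = (W_j : j ∈ J)`. -/
def jointW {Ω : Type*} {n : ℕ} {σW : Fin n → Type*} (W : ∀ j, Ω → σW j)
    (J : Finset (Fin n)) : Ω → ∀ j : J, σW j.1 :=
  fun ω j => W j.1 ω

/-- The joint random variable `(S_i^j : (i,j) ∈ E)` for a set `E` of pairs. -/
def jointS {Ω : Type*} {n : ℕ} {σS : Fin n → Fin n → Type*} (S : ∀ i j, Ω → σS i j)
    (E : Finset (Fin n × Fin n)) : Ω → ∀ e : E, σS e.1.1 e.1.2 :=
  fun ω e => S e.1.1 e.1.2 ω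

/-- The joint random variable `S_I^j = (S_i^j : i ∈ I)`. -/
def jointSto {Ω : Type*} {n : ℕ} {σS : Fin n → Fin n → Type*} (S : ∀ i j, Ω → σS i j)
    (I : Finset (Fin n)) (j : Fin n) : Ω → ∀ i : I, σS i.1 j :=
  fun ω i => S i.1 j ω

/-- An exact-repair regenerating code with parameters `(n,k,d)` (with `1 ≤ k ≤ d ≤ n-1`)
and secondary parameters `(B,α,β)`: the file `M`, the stored data `W j` on server `j`
(servers indexed by `Fin n`, server `j` of the paper being index `j-1`), and the helper
information `S i j` sent from server `i` to repair server `j`. -/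
structure IsRegenCode {Ω : Type*} [Fintype Ω] (n k d : ℕ) (B α β : ℝ) (P : Ω → ℝ)
    {σM : Type*} {σW : Fin n → Type*} {σS : Fin n → Fin n → Type*}
    (M : Ω → σM) (W : ∀ j, Ω → σW j) (S : ∀ i j, Ω → σS i j) : Prop where
  prob_nonneg : ∀ ω, 0 ≤ P ω
  prob_sum : ∑ ω, P ω = 1
  hk : 1 ≤ k
  hkd : k ≤ d
  hdn : d + 1 ≤ n
  hB : 0 ≤ B
  hα : 0 ≤ α
  hβ : 0 ≤ β
  hMB : entH P M = B
  hWα : ∀ j, entH P (W j) = α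
  hWM : ∀ j, condH P (W j) M = 0
  hMW : ∀ J : Finset (Fin n), k ≤ J.card → condH P M (jointW W J) = 0
  hSβ : ∀ i j, i ≠ j → entH P (S i j) = β
  hSW : ∀ i j, i ≠ j → condH P (S i j) (W i) = 0
  hWS : ∀ (j : Fin n) (I : Finset (Fin n)), d ≤ I.card → j ∉ I →
    condH P (W j) (jointSto S I j) = 0

/-- `B_q = qα + ((k-q)(k-q-1)/2)β + (d+1-k)(k-q)β`. -/
noncomputable def Bfun (k d q : ℕ) (α β : ℝ) : ℝ :=
  (q : ℝ) * α + (((k - q) * (k - q - 1) : ℕ) : ℝ) / 2 * β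
    + (((d + 1 - k) * (k - q) : ℕ) : ℝ) * β

open Classical in
/-- The probability of the fiber of `X` through `ω`. -/
noncomputable def fiberMass {Ω S : Type*} [Fintype Ω] (P : Ω → ℝ) (X : Ω → S) (ω : Ω) : ℝ :=
  ∑ ω' with X ω' = X ω, P ω'

section FiberMass

variable {Ω S : Type*} [Fintype Ω] {P : Ω → ℝ}

lemma fiberMass_eq [DecidableEq S] (P : Ω → ℝ) (X : Ω → S) (ω : Ω) :
    fiberMass P X ω = ∑ ω' with X ω' = X ω, P ω' := by
  unfold fiberMass
  congr!

lemma fiberMass_congr {X : Ω → S} {ω ω' : Ω} (h : X ω = X ω') :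
    fiberMass P X ω = fiberMass P X ω' := by
  rw [fiberMass, fiberMass, h]

lemma le_fiberMass (hP0 : ∀ ω, 0 ≤ P ω) (X : Ω → S) (ω : Ω) : P ω ≤ fiberMass P X ω :=
  single_le_sum (f := P) (fun ω' _ => hP0 ω') (by simp)

lemma fiberMass_nonneg (hP0 : ∀ ω, 0 ≤ P ω) (X : Ω → S) (ω : Ω) : 0 ≤ fiberMass P X ω :=
  (hP0 ω).trans (le_fiberMass hP0 X ω)

lemma entH_eq_sum_fiberMass (P : Ω → ℝ) (X : Ω → S) :
    entH P X = -∑ ω, P ω * Real.logb 2 (fiberMass P X ω) := by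
  let := Classical.decEq S
  rw [← sum_fiberwise_of_maps_to (fun ω _ => mem_image_of_mem X (mem_univ ω)), entH,
    ← sum_neg_distrib]
  refine sum_congr rfl fun s _ => congrArg Neg.neg ?_
  rw [sum_mul]
  refine sum_congr rfl fun ω hω => ?_
  rw [← (mem_filter.1 hω).2, fiberMass_eq]

/-- Normalized masses on a single fiber of `X` sum to at most one. -/
lemma sum_div_fiberMass_le_one (hP0 : ∀ ω, 0 ≤ P ω) (X : Ω → S) (s : Finset Ω)
    (hs : ∀ ω ∈ s, ∀ ω' ∈ s, 0 < P ω → 0 < P ω' → X ω = X ω') :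
    ∑ ω ∈ s, P ω / fiberMass P X ω ≤ 1 := by
  classical
  by_cases h : ∃ ω₀ ∈ s, 0 < P ω₀
  · obtain ⟨ω₀, hω₀, hpos⟩ := h
    have hm : 0 < fiberMass P X ω₀ := hpos.trans_le (le_fiberMass hP0 X ω₀)
    calc ∑ ω ∈ s, P ω / fiberMass P X ω
        ≤ ∑ ω with X ω = X ω₀, P ω / fiberMass P X ω₀ := by
          rw [← sum_filter_of_ne (p := fun ω => 0 < P ω)]
          · refine (sum_congr rfl fun ω hω => ?_).trans_le
              (sum_le_sum_of_subset_of_nonneg (fun ω hω => ?_) fun ω _ _ =>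
                div_nonneg (hP0 ω) hm.le)
            · obtain ⟨hωs, hω⟩ := mem_filter.1 hω
              rw [fiberMass_congr (hs ω hωs ω₀ hω₀ hω hpos)]
            · obtain ⟨hωs, hω⟩ := mem_filter.1 hω
              simpa using hs ω hωs ω₀ hω₀ hω hpos
          · intro ω _ hne
            exact (hP0 ω).lt_of_ne fun h => hne (by simp [← h])
      _ = 1 := by
          rw [← sum_div, div_eq_one_iff_eq hm.ne', fiberMass]
  · push Not at h
    refine (sum_nonpos fun ω hω => ?_).trans zero_le_one
    exact div_nonpos_of_nonpos_of_nonneg (h ω hω) (fiberMass_nonneg hP0 X ω)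

end FiberMass

/-- `Y` almost surely determines `X`. -/
def Determines {Ω S T : Type*} (P : Ω → ℝ) (Y : Ω → T) (X : Ω → S) : Prop :=
  ∀ ω ω', 0 < P ω → 0 < P ω' → Y ω = Y ω' → X ω = X ω'

section Entropy

variable {Ω S T U V : Type*} [Fintype Ω] {P : Ω → ℝ}

lemma determines_of_condH_eq_zero (hP0 : ∀ ω, 0 ≤ P ω) {X : Ω → S} {Y : Ω → T}
    (h : condH P X Y = 0) : Determines P Y X := by
  classical
  intro ω ω' hω hω' hY
  have hsub : ∀ υ, (univ.filter fun υ' => (X υ', Y υ') = (X υ, Y υ)) ⊆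
      univ.filter fun υ' => Y υ' = Y υ := by
    intro υ υ'
    simp +contextual
  have hle : ∀ υ, fiberMass P (fun υ => (X υ, Y υ)) υ ≤ fiberMass P Y υ := fun υ => by
    rw [fiberMass_eq, fiberMass_eq]
    exact sum_le_sum_of_subset_of_nonneg (hsub υ) fun υ' _ _ => hP0 υ'
  have hzero : ∑ υ, P υ * (Real.logb 2 (fiberMass P Y υ) -
      Real.logb 2 (fiberMass P (fun υ => (X υ, Y υ)) υ)) = 0 := by
    simp only [mul_sub, sum_sub_distrib]
    rw [condH, entH_eq_sum_fiberMass, entH_eq_sum_fiberMass] at h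
    linarith
  have hnonneg : ∀ υ ∈ univ, 0 ≤ P υ * (Real.logb 2 (fiberMass P Y υ) -
      Real.logb 2 (fiberMass P (fun υ => (X υ, Y υ)) υ)) := by
    intro υ _
    rcases (hP0 υ).eq_or_lt with hυ | hυ
    · simp [← hυ]
    · exact mul_nonneg hυ.le (sub_nonneg.2 (Real.logb_le_logb_of_le one_lt_two
        (hυ.trans_le (le_fiberMass hP0 _ υ)) (hle υ)))
  have hω0 := (sum_eq_zero_iff_of_nonneg hnonneg).1 hzero ω (mem_univ ω)
  have hlog := sub_eq_zero.1 ((mul_eq_zero.1 hω0).resolve_left hω.ne')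
  have heq : fiberMass P Y ω = fiberMass P (fun υ => (X υ, Y υ)) ω :=
    Real.logb_injOn_pos one_lt_two (hω.trans_le (le_fiberMass hP0 _ ω))
      (hω.trans_le (le_fiberMass hP0 _ ω)) hlog
  by_contra hX
  refine heq.not_gt ?_
  rw [fiberMass_eq, fiberMass_eq]
  exact sum_lt_sum_of_subset (hsub ω) (i := ω') (by simp [hY]) (by simp [Ne.symm hX]) hω'
    fun υ _ _ => hP0 υ

/-- The tilted masses arising from `log x ≤ x - 1` in the proof of submodularity have total at
most one. -/
lemma sum_fiberMass_ratio_le_one (hP0 : ∀ ω, 0 ≤ P ω) (hP1 : ∑ ω, P ω = 1)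
    {X : Ω → S} {Y : Ω → T} {Z : Ω → U} {W : Ω → V}
    (hW : Determines P (fun ω => (X ω, Y ω)) W)
    (hX : Determines P X Z) (hY : Determines P Y Z) :
    ∑ ω, P ω / fiberMass P W ω * (fiberMass P X ω * fiberMass P Y ω / fiberMass P Z ω) ≤ 1 := by
  classical
  let common (ω₁ ω₂ : Ω) : Finset Ω := univ.filter fun ω => X ω₁ = X ω ∧ Y ω₂ = Y ω
  have hexpand : ∀ ω,
      P ω / fiberMass P W ω * (fiberMass P X ω * fiberMass P Y ω / fiberMass P Z ω) =
      ∑ ω₁, ∑ ω₂, P ω₁ / fiberMass P Z ω₁ * (P ω₂ *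
        if ω ∈ common ω₁ ω₂ then P ω / fiberMass P W ω else 0) := by
    intro ω
    rcases (hP0 ω).eq_or_lt with hω | hω
    · simp [← hω]
    have hprod : fiberMass P X ω * fiberMass P Y ω / fiberMass P Z ω =
        ∑ ω₁, ∑ ω₂, if X ω₁ = X ω ∧ Y ω₂ = Y ω then P ω₁ * P ω₂ / fiberMass P Z ω else 0 := by
      rw [fiberMass, fiberMass, sum_filter, sum_filter, sum_mul_sum, sum_div]
      refine sum_congr rfl fun ω₁ _ => ?_
      rw [sum_div]
      refine sum_congr rfl fun ω₂ _ => ?_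
      by_cases h₁ : X ω₁ = X ω <;> by_cases h₂ : Y ω₂ = Y ω <;> simp [h₁, h₂]
    rw [hprod, mul_sum]
    refine sum_congr rfl fun ω₁ _ => ?_
    rw [mul_sum]
    refine sum_congr rfl fun ω₂ _ => ?_
    rcases (hP0 ω₁).eq_or_lt with hω₁ | hω₁
    · simp [← hω₁]
    by_cases h : X ω₁ = X ω ∧ Y ω₂ = Y ω
    · simp only [common, mem_filter, mem_univ, h, and_self, if_true,
        fiberMass_congr (hX ω₁ ω hω₁ hω h.1)]
      ring
    · simp [common, h]
  have hinner : ∀ ω₁ ω₂, P ω₁ / fiberMass P Z ω₁ * (P ω₂ *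
      ∑ ω ∈ common ω₁ ω₂, P ω / fiberMass P W ω) ≤
      P ω₁ / fiberMass P Z ω₁ * if Z ω₂ = Z ω₁ then P ω₂ else 0 := by
    intro ω₁ ω₂
    rcases (hP0 ω₁).eq_or_lt with hω₁ | hω₁
    · simp [← hω₁]
    rcases (hP0 ω₂).eq_or_lt with hω₂ | hω₂
    · simp [← hω₂]
    refine mul_le_mul_of_nonneg_left ?_ (div_nonneg hω₁.le (fiberMass_nonneg hP0 Z ω₁))
    split_ifs with hZ
    · refine mul_le_of_le_one_right hω₂.le (sum_div_fiberMass_le_one hP0 W _ ?_)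
      intro ω hω ω' hω' hp hp'
      simp only [common, mem_filter, mem_univ, true_and] at hω hω'
      exact hW ω ω' hp hp' (Prod.ext (hω.1.symm.trans hω'.1) (hω.2.symm.trans hω'.2))
    · refine (mul_eq_zero_of_right _ (sum_eq_zero fun ω hω => ?_)).le
      simp only [common, mem_filter, mem_univ, true_and] at hω
      rcases (hP0 ω).eq_or_lt with hp | hp
      · simp [← hp]
      · exact absurd ((hY ω₂ ω hω₂ hp hω.2).trans (hX ω₁ ω hω₁ hp hω.1).symm) hZ
  calc ∑ ω, P ω / fiberMass P W ω * (fiberMass P X ω * fiberMass P Y ω / fiberMass P Z ω)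
      = ∑ ω₁, ∑ ω₂, P ω₁ / fiberMass P Z ω₁ * (P ω₂ *
          ∑ ω ∈ common ω₁ ω₂, P ω / fiberMass P W ω) := by
        rw [sum_congr rfl fun ω _ => hexpand ω, sum_comm]
        refine sum_congr rfl fun ω₁ _ => ?_
        rw [sum_comm]
        refine sum_congr rfl fun ω₂ _ => ?_
        rw [← mul_sum, ← mul_sum, sum_ite_mem, univ_inter]
    _ ≤ ∑ ω₁, ∑ ω₂, P ω₁ / fiberMass P Z ω₁ * if Z ω₂ = Z ω₁ then P ω₂ else 0 :=
        sum_le_sum fun ω₁ _ => sum_le_sum fun ω₂ _ => hinner ω₁ ω₂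
    _ ≤ ∑ ω₁, P ω₁ := by
        refine sum_le_sum fun ω₁ _ => ?_
        rw [← mul_sum, ← sum_filter, ← fiberMass_eq P Z ω₁, div_mul_eq_mul_div, mul_div_assoc]
        exact mul_le_of_le_one_right (hP0 ω₁) (div_self_le_one _)
    _ = 1 := hP1

/-- Submodularity of entropy. -/
lemma entH_add_entH_le (hP0 : ∀ ω, 0 ≤ P ω) (hP1 : ∑ ω, P ω = 1)
    {X : Ω → S} {Y : Ω → T} {Z : Ω → U} {W : Ω → V}
    (hW : Determines P (fun ω => (X ω, Y ω)) W)
    (hX : Determines P X Z) (hY : Determines P Y Z) :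
    entH P W + entH P Z ≤ entH P X + entH P Y := by
  have hpoint : ∀ ω, P ω * (Real.log (fiberMass P X ω) + Real.log (fiberMass P Y ω)
      - Real.log (fiberMass P W ω) - Real.log (fiberMass P Z ω)) ≤
      P ω / fiberMass P W ω * (fiberMass P X ω * fiberMass P Y ω / fiberMass P Z ω) - P ω := by
    intro ω
    rcases (hP0 ω).eq_or_lt with hω | hω
    · simp [← hω]
    have hx := hω.trans_le (le_fiberMass hP0 X ω)
    have hy := hω.trans_le (le_fiberMass hP0 Y ω)
    have hz := hω.trans_le (le_fiberMass hP0 Z ω)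
    have hw := hω.trans_le (le_fiberMass hP0 W ω)
    have hlog := Real.log_le_sub_one_of_pos
      (show 0 < fiberMass P X ω * fiberMass P Y ω / (fiberMass P W ω * fiberMass P Z ω) by
        positivity)
    rw [Real.log_div (by positivity) (by positivity), Real.log_mul hx.ne' hy.ne',
      Real.log_mul hw.ne' hz.ne'] at hlog
    refine (mul_le_mul_of_nonneg_left (by linarith) hω.le).trans_eq
      (b := P ω * (fiberMass P X ω * fiberMass P Y ω / (fiberMass P W ω * fiberMass P Z ω) - 1)) ?_
    field_simp
  have hsum := (sum_le_sum fun ω (_ : ω ∈ univ) => hpoint ω).trans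
    (by
      rw [sum_sub_distrib, hP1, sub_nonpos]
      exact sum_fiberMass_ratio_le_one hP0 hP1 hW hX hY)
  simp only [mul_sub, mul_add, sum_sub_distrib, sum_add_distrib] at hsum
  have hent : ∀ Q : Ω → ℝ, -∑ ω, P ω * Real.logb 2 (Q ω) =
      -(∑ ω, P ω * Real.log (Q ω)) / Real.log 2 := fun Q => by
    simp only [Real.logb, mul_div_assoc', ← sum_div, neg_div]
  simp only [entH_eq_sum_fiberMass, hent, ← add_div]
  exact div_le_div_of_nonneg_right (by linarith) (Real.log_nonneg one_le_two)

lemma entH_le_of_determines (hP0 : ∀ ω, 0 ≤ P ω) (hP1 : ∑ ω, P ω = 1)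
    {X : Ω → S} {Y : Ω → T} (h : Determines P Y X) : entH P X ≤ entH P Y := by
  have := entH_add_entH_le hP0 hP1 (X := Y) (Y := Y) (Z := Y) (W := X)
    (fun ω ω' hω hω' he => h ω ω' hω hω' (congrArg Prod.fst he))
    (fun _ _ _ _ => id) (fun _ _ _ _ => id)
  linarith

lemma entH_eq_zero_of_subsingleton [Subsingleton S] (hP1 : ∑ ω, P ω = 1) (X : Ω → S) :
    entH P X = 0 := by
  have h : ∀ ω, fiberMass P X ω = 1 := fun ω => by
    simp [fiberMass, Subsingleton.elim (X _) (X ω), hP1]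
  simp [entH_eq_sum_fiberMass, h]

/-- Subadditivity of entropy for finite families. -/
lemma entH_pi_le_sum (hP0 : ∀ ω, 0 ≤ P ω) (hP1 : ∑ ω, P ω = 1)
    {ι : Type*} {σ : ι → Type*} (X : ∀ i, Ω → σ i) (s : Finset ι) :
    entH P (fun ω (i : s) => X i.1 ω) ≤ ∑ i ∈ s, entH P (X i) := by
  classical
  induction s using Finset.induction_on with
  | empty => simp [entH_eq_zero_of_subsingleton hP1]
  | insert i s hi ih =>
    rw [sum_insert hi]
    have := entH_add_entH_le hP0 hP1 (X := X i) (Y := fun ω (j : s) => X j.1 ω)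
      (Z := fun _ => ()) (W := fun ω (j : (insert i s : Finset ι)) => X j.1 ω)
      (fun ω ω' _ _ he => by
        obtain ⟨h1, h2⟩ := Prod.mk.inj he
        funext ⟨j, hj⟩
        rcases mem_insert.1 hj with rfl | hj
        · exact h1
        · exact congrFun h2 ⟨j, hj⟩)
      (fun _ _ _ _ _ => rfl) (fun _ _ _ _ _ => rfl)
    rw [entH_eq_zero_of_subsingleton hP1 fun _ => ()] at this
    linarith

end Entropy

/-- chain bound with `H(a_n | a_1,…,a_{n-1}) = 0`:
`n·H(M) ≤ Σ H(A_i) + Σ_{i=1}^{n-1} H(a_i)`. -/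
theorem stmt_3 {Ω : Type*} [Fintype Ω] (P : Ω → ℝ)
    (hP0 : ∀ ω, 0 ≤ P ω) (hP1 : ∑ ω, P ω = 1)
    {n : ℕ} (hn : 0 < n) {σM : Type*} {σA σa : Fin n → Type*}
    (M : Ω → σM) (A : ∀ i, Ω → σA i) (a : ∀ i, Ω → σa i)
    (h1 : ∀ i, condH P M (fun ω => (A i ω, a i ω)) = 0)
    (h2 : ∀ i j : Fin n, i < j → condH P (a j) (A i) = 0)
    (hlast : condH P (a ⟨n - 1, by omega⟩)
      (fun ω (i : {i : Fin n // (i : ℕ) < n - 1}) => a i.1 ω) = 0) :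
    (n : ℝ) * entH P M ≤ ∑ i, entH P (A i)
      + ∑ i ∈ Finset.univ.filter (fun i : Fin n => (i : ℕ) < n - 1), entH P (a i) := by
  have hM : ∀ i, Determines P (fun ω => (A i ω, a i ω)) M :=
    fun i => determines_of_condH_eq_zero hP0 (h1 i)
  have hA : ∀ i j : Fin n, i < j → Determines P (A i) (a j) :=
    fun i j hij => determines_of_condH_eq_zero hP0 (h2 i j hij)
  have hL := determines_of_condH_eq_zero hP0 hlast
  let tail (k : ℕ) (ω : Ω) (j : {j : Fin n // k ≤ (j : ℕ)}) : σa j.1 := a j.1 ω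
  have hstep : ∀ i : Fin n,
      entH P M ≤ entH P (A i) + (entH P (tail i) - entH P (tail (i + 1))) := by
    intro i
    have := entH_add_entH_le hP0 hP1 (X := A i) (Y := tail i)
      (Z := tail (i + 1)) (W := M)
      (fun ω ω' hω hω' he => by
        obtain ⟨hAi, hai⟩ := Prod.mk.inj he
        exact hM i ω ω' hω hω' (Prod.ext hAi (congrFun hai ⟨i, le_rfl⟩)))
      (fun ω ω' hω hω' he => funext fun j => hA i j.1 j.2 ω ω' hω hω' he)
      (fun ω ω' _ _ he => funext fun j => congrFun he ⟨j.1, (Nat.le_succ _).trans j.2⟩)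
    linarith
  have hsum := sum_le_sum fun i (_ : i ∈ univ) => hstep i
  rw [sum_const, card_univ, Fintype.card_fin, nsmul_eq_mul, sum_add_distrib,
    Fin.sum_univ_eq_sum_range (fun k => entH P (tail k) - entH P (tail (k + 1))) n,
    sum_range_sub'] at hsum
  have hend : entH P (tail n) = 0 := by
    have : IsEmpty {j : Fin n // n ≤ (j : ℕ)} := ⟨fun j => j.1.2.not_ge j.2⟩
    exact entH_eq_zero_of_subsingleton hP1 _
  have hstart : entH P (tail 0) ≤
      entH P (fun ω (j : univ.filter fun i : Fin n => (i : ℕ) < n - 1) => a j.1 ω) := by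
    refine entH_le_of_determines hP0 hP1 fun ω ω' hω hω' he => ?_
    have hinit : ∀ j : Fin n, (j : ℕ) < n - 1 → a j ω = a j ω' := fun j hj =>
      congrFun he ⟨j, by simpa using hj⟩
    funext ⟨j, _⟩
    by_cases hj : (j : ℕ) < n - 1
    · exact hinit j hj
    · have hj' : j = ⟨n - 1, by omega⟩ := Fin.ext (by dsimp only; omega)
      change a j ω = a j ω'
      rw [hj']
      exact hL ω ω' hω hω' (funext fun i => hinit i.1 i.2)
  have hsub := entH_pi_le_sum hP0 hP1 a (univ.filter fun i : Fin n => (i : ℕ) < n - 1)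
  linarith
end

section
/- (First outer bound.) Let (M, (W_j), (S_i^j)) be an exact-repair regenerating code with parameters (n,k,d) and secondary parameters (B,α,β), where n ≥ d+1. Let q, ℓ, m be positive integers with q + ℓ + m ≤ k, let N ≥ 3 be an integer, and let V_1, V_2, …, V_{N−2} be subsets of {ℓ+m+1, …, d+1} of sizes q_i = |V_i| with 1 ≤ q_i ≤ k−ℓ−m and with empty intersection V_1 ∩ V_2 ∩ ⋯ ∩ V_{N−2} = ∅. Then N·B ≤ B_q + Σ_{i=1}^{N−2} B_{q_i} + B_{ℓ+m} − ℓmβ. -/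
open Finset

/-! ### Entropy of finitely-valued random variables -/

section Entropy

variable {Ω : Type*} [Fintype Ω] {P : Ω → ℝ}

open Classical in
/-- The probability of the level set of `X` containing `ω`. -/
noncomputable def levelMass {S : Type*} (P : Ω → ℝ) (X : Ω → S) (ω : Ω) : ℝ :=
  ∑ ω' ∈ univ.filter (fun ω' => X ω' = X ω), P ω'

lemma entH_eq_sum {S : Type*} (P : Ω → ℝ) (X : Ω → S) :
    entH P X = ∑ ω, P ω * -Real.logb 2 (levelMass P X ω) := by
  classical
  unfold entH
  rw [← Finset.sum_fiberwise_of_maps_to (s := univ) (t := univ.image X) (g := X)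
    (fun ω _ => mem_image_of_mem X (mem_univ ω))]
  refine Finset.sum_congr (by congr) fun s _ => ?_
  have h : ∀ ω ∈ univ.filter (fun ω => X ω = s),
      P ω * -Real.logb 2 (levelMass P X ω) =
        P ω * -Real.logb 2 (∑ ω ∈ univ.filter (fun ω => X ω = s), P ω) := by
    intro ω hω
    rw [mem_filter] at hω
    simp only [levelMass, hω.2]
  rw [Finset.sum_congr rfl h, ← Finset.sum_mul]
  simp only [mul_neg]

lemma le_levelMass {S : Type*} (hP : ∀ ω, 0 ≤ P ω) (X : Ω → S) (ω : Ω) :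
    P ω ≤ levelMass P X ω := by
  classical
  unfold levelMass
  exact Finset.single_le_sum (f := P) (fun i _ => hP i) (by simp)

lemma levelMass_anti {S T : Type*} (hP : ∀ ω, 0 ≤ P ω) {X : Ω → S} {Y : Ω → T}
    (h : ∀ ω ω', Y ω = Y ω' → X ω = X ω') (ω : Ω) : levelMass P Y ω ≤ levelMass P X ω := by
  classical
  unfold levelMass
  refine Finset.sum_le_sum_of_subset_of_nonneg (fun x hx => ?_) fun i _ _ => hP i
  simp only [mem_filter, mem_univ, true_and] at hx ⊢
  exact h _ _ hx

lemma levelMass_congr {S : Type*} {X : Ω → S} {ω ω' : Ω} (h : X ω = X ω') :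
    levelMass P X ω = levelMass P X ω' := by
  unfold levelMass
  rw [h]

/-- A function of a random variable has at most its entropy. -/
lemma entH_mono {S T : Type*} (hP : ∀ ω, 0 ≤ P ω) {X : Ω → S} {Y : Ω → T}
    (h : ∀ ω ω', Y ω = Y ω' → X ω = X ω') : entH P X ≤ entH P Y := by
  rw [entH_eq_sum, entH_eq_sum]
  refine Finset.sum_le_sum fun ω _ => ?_
  rcases (hP ω).eq_or_lt with h0 | h0
  · simp [← h0]
  · refine mul_le_mul_of_nonneg_left (neg_le_neg ?_) h0.le
    exact Real.logb_le_logb_of_le (by norm_num) (h0.trans_le (le_levelMass hP Y ω))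
      (levelMass_anti hP h ω)

lemma entH_congr {S T : Type*} (hP : ∀ ω, 0 ≤ P ω) {X : Ω → S} {Y : Ω → T}
    (h : ∀ ω ω', X ω = X ω' ↔ Y ω = Y ω') : entH P X = entH P Y :=
  (entH_mono hP fun _ _ => (h _ _).2).antisymm (entH_mono hP fun _ _ => (h _ _).1)

lemma entH_const {S : Type*} (hP1 : ∑ ω, P ω = 1) {X : Ω → S} (h : ∀ ω ω', X ω = X ω') :
    entH P X = 0 := by
  classical
  rw [entH_eq_sum]
  refine Finset.sum_eq_zero fun ω _ => ?_
  have : levelMass P X ω = 1 := by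
    rw [levelMass, filter_true_of_mem fun x _ => h x ω, hP1]
  simp [this]

/-- Submodularity of entropy: `U` is the joint variable of `X` and `Y`, and `Z` is a common
function of `X` and `Y`. -/
lemma entH_submodular {S T U V : Type*} (hP : ∀ ω, 0 ≤ P ω) (hP1 : ∑ ω, P ω = 1)
    {X : Ω → S} {Y : Ω → T} {J : Ω → U} {Z : Ω → V}
    (hJ : ∀ ω ω', J ω = J ω' ↔ X ω = X ω' ∧ Y ω = Y ω')
    (hZX : ∀ ω ω', X ω = X ω' → Z ω = Z ω') (hZY : ∀ ω ω', Y ω = Y ω' → Z ω = Z ω') :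
    entH P J + entH P Z ≤ entH P X + entH P Y := by
  classical
  set a := levelMass P X with ha
  set b := levelMass P Y with hb
  set c := levelMass P J with hc
  set e := levelMass P Z with he
  have he0 : ∀ ω, 0 ≤ e ω := fun ω => Finset.sum_nonneg fun i _ => hP i
  -- the sum of likelihood ratios is at most one
  have inner : ∀ ω₁ ω₂, ∑ ω, (if X ω₁ = X ω ∧ Y ω₂ = Y ω then P ω / (c ω * e ω) else 0)
      ≤ if Z ω₂ = Z ω₁ then (e ω₁)⁻¹ else 0 := by
    intro ω₁ ω₂
    by_cases hex : ∃ ω₀, X ω₁ = X ω₀ ∧ Y ω₂ = Y ω₀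
    · obtain ⟨ω₀, h1, h2⟩ := hex
      have hZ1 := hZX _ _ h1
      have hZ2 := hZY _ _ h2
      rw [if_pos (hZ2.trans hZ1.symm)]
      have key : ∀ ω, (if X ω₁ = X ω ∧ Y ω₂ = Y ω then P ω / (c ω * e ω) else 0)
          = (if J ω = J ω₀ then P ω else 0) * (c ω₀ * e ω₁)⁻¹ := by
        intro ω
        have hiff : (X ω₁ = X ω ∧ Y ω₂ = Y ω) ↔ J ω = J ω₀ := by
          rw [hJ, h1, h2, eq_comm, @eq_comm _ (Y ω₀)]
        by_cases hω : J ω = J ω₀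
        · have e1 : c ω = c ω₀ := levelMass_congr hω
          have e2 : e ω = e ω₁ := levelMass_congr (hZX _ _ (h1.trans ((hJ _ _).1 hω).1.symm)).symm
          rw [if_pos (hiff.2 hω), if_pos hω, e1, e2, div_eq_mul_inv]
        · rw [if_neg (fun h => hω (hiff.1 h)), if_neg hω, zero_mul]
      rw [Finset.sum_congr rfl fun ω _ => key ω, ← Finset.sum_mul, ← Finset.sum_filter]
      have : ∑ ω ∈ univ.filter (fun ω => J ω = J ω₀), P ω = c ω₀ := by
        simp only [hc, levelMass]
      rw [this, mul_inv, ← mul_assoc]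
      exact mul_le_of_le_one_left (inv_nonneg.2 (he0 _)) mul_inv_le_one
    · push Not at hex
      rw [Finset.sum_eq_zero fun ω _ => if_neg fun h => hex ω h.1 h.2]
      split_ifs
      · exact inv_nonneg.2 (he0 _)
      · exact le_rfl
  have total : ∑ ω, P ω * (a ω * b ω / (c ω * e ω)) ≤ 1 := by
    calc ∑ ω, P ω * (a ω * b ω / (c ω * e ω))
        = ∑ ω, ∑ ω₁, ∑ ω₂, P ω₁ * P ω₂ *
            (if X ω₁ = X ω ∧ Y ω₂ = Y ω then P ω / (c ω * e ω) else 0) := by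
          refine Finset.sum_congr rfl fun ω _ => ?_
          have e1 : a ω = ∑ ω₁, if X ω₁ = X ω then P ω₁ else 0 := by
            rw [ha, levelMass, Finset.sum_filter]
          have e2 : b ω = ∑ ω₂, if Y ω₂ = Y ω then P ω₂ else 0 := by
            rw [hb, levelMass, Finset.sum_filter]
          rw [e1, e2, Finset.sum_mul_sum, Finset.sum_div, Finset.mul_sum]
          refine Finset.sum_congr rfl fun ω₁ _ => ?_
          rw [Finset.sum_div, Finset.mul_sum]
          refine Finset.sum_congr rfl fun ω₂ _ => ?_
          by_cases h1 : X ω₁ = X ω <;> by_cases h2 : Y ω₂ = Y ω <;> simp [h1, h2] <;> ring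
      _ = ∑ ω₁, ∑ ω₂, P ω₁ * P ω₂ *
            ∑ ω, (if X ω₁ = X ω ∧ Y ω₂ = Y ω then P ω / (c ω * e ω) else 0) := by
          rw [Finset.sum_comm]
          refine Finset.sum_congr rfl fun ω₁ _ => ?_
          rw [Finset.sum_comm]
          exact Finset.sum_congr rfl fun ω₂ _ => (Finset.mul_sum _ _ _).symm
      _ ≤ ∑ ω₁, ∑ ω₂, P ω₁ * P ω₂ * (if Z ω₂ = Z ω₁ then (e ω₁)⁻¹ else 0) :=
          Finset.sum_le_sum fun ω₁ _ => Finset.sum_le_sum fun ω₂ _ =>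
            mul_le_mul_of_nonneg_left (inner ω₁ ω₂) (mul_nonneg (hP _) (hP _))
      _ = ∑ ω₁, P ω₁ * (e ω₁ * (e ω₁)⁻¹) := by
          refine Finset.sum_congr rfl fun ω₁ _ => ?_
          have e1 : e ω₁ = ∑ ω₂, if Z ω₂ = Z ω₁ then P ω₂ else 0 := by
            rw [he, levelMass, Finset.sum_filter]
          conv_rhs => rw [← mul_assoc, e1, Finset.mul_sum, Finset.sum_mul, ← e1]
          refine Finset.sum_congr rfl fun ω₂ _ => ?_
          split_ifs <;> simp
      _ ≤ ∑ ω₁, P ω₁ :=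
          Finset.sum_le_sum fun ω₁ _ => mul_le_of_le_one_right (hP _) mul_inv_le_one
      _ = 1 := hP1
  have hlog : ∀ ω, P ω * (Real.log (a ω) + Real.log (b ω) - Real.log (c ω) - Real.log (e ω))
      ≤ P ω * (a ω * b ω / (c ω * e ω)) - P ω := by
    intro ω
    rcases (hP ω).eq_or_lt with h0 | h0
    · simp [← h0]
    · have pa : 0 < a ω := h0.trans_le (le_levelMass hP X ω)
      have pb : 0 < b ω := h0.trans_le (le_levelMass hP Y ω)
      have pc : 0 < c ω := h0.trans_le (le_levelMass hP J ω)
      have pe : 0 < e ω := h0.trans_le (le_levelMass hP Z ω)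
      have := Real.log_le_sub_one_of_pos (div_pos (mul_pos pa pb) (mul_pos pc pe))
      rw [Real.log_div (mul_pos pa pb).ne' (mul_pos pc pe).ne', Real.log_mul pa.ne' pb.ne',
        Real.log_mul pc.ne' pe.ne'] at this
      have := mul_le_mul_of_nonneg_left this h0.le
      linarith
  have hsum := Finset.sum_le_sum fun ω (_ : ω ∈ univ) => hlog ω
  rw [Finset.sum_sub_distrib, hP1] at hsum
  have hl2 : 0 < Real.log 2 := Real.log_pos (by norm_num)
  have hdiff : entH P J + entH P Z - (entH P X + entH P Y) =
      (∑ ω, P ω * (Real.log (a ω) + Real.log (b ω) - Real.log (c ω) - Real.log (e ω)))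
        / Real.log 2 := by
    simp only [entH_eq_sum, ← Finset.sum_add_distrib, ← Finset.sum_sub_distrib, Finset.sum_div]
    refine Finset.sum_congr rfl fun ω _ => ?_
    simp only [Real.logb, ← ha, ← hb, ← hc, ← he]
    ring
  have : entH P J + entH P Z - (entH P X + entH P Y) ≤ 0 := by
    rw [hdiff]
    exact div_nonpos_of_nonpos_of_nonneg (by linarith) hl2.le
  linarith

end Entropy

/-! ### Entropy functions of regenerating codes -/

/-- The properties of `F J E = H(W_J, S_E)` that hold for a regenerating code. -/
structure IsCodeEntropy (n k d : ℕ) (B α β : ℝ)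
    (F : Finset (Fin n) → Finset (Fin n × Fin n) → ℝ) : Prop where
  mono : ∀ {J J' E E'}, J ⊆ J' → E ⊆ E' → F J E ≤ F J' E'
  submodular : ∀ J J' E E',
    F (J ∪ J') (E ∪ E') + F (J ∩ J') (E ∩ E') ≤ F J E + F J' E'
  empty : F ∅ ∅ = 0
  store : ∀ j, F {j} ∅ = α
  message : ∀ i j, i ≠ j → F ∅ {(i, j)} = β
  send : ∀ i j, i ≠ j → F {i} {(i, j)} ≤ F {i} ∅
  repair : ∀ (j : Fin n) (I : Finset (Fin n)), d ≤ I.card → j ∉ I →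
    F {j} (I ×ˢ {j}) ≤ F ∅ (I ×ˢ {j})
  recover : ∀ J : Finset (Fin n), k ≤ J.card → B ≤ F J ∅

section CodeEntropyOfCode

variable {Ω : Type*} {n : ℕ} {σW : Fin n → Type*} {σS : Fin n → Fin n → Type*}

lemma jointW_eq_iff (W : ∀ j, Ω → σW j) (J : Finset (Fin n)) (ω ω' : Ω) :
    jointW W J ω = jointW W J ω' ↔ ∀ j ∈ J, W j ω = W j ω' := by
  simp [jointW, funext_iff]

lemma jointS_eq_iff (S : ∀ i j, Ω → σS i j) (E : Finset (Fin n × Fin n)) (ω ω' : Ω) :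
    jointS S E ω = jointS S E ω' ↔ ∀ i j, (i, j) ∈ E → S i j ω = S i j ω' := by
  simp [jointS, funext_iff]

lemma jointSto_eq_iff (S : ∀ i j, Ω → σS i j) (I : Finset (Fin n)) (j : Fin n) (ω ω' : Ω) :
    jointSto S I j ω = jointSto S I j ω' ↔ ∀ i ∈ I, S i j ω = S i j ω' := by
  simp [jointSto, funext_iff]

lemma IsRegenCode.isCodeEntropy [Fintype Ω] {k d : ℕ} {B α β : ℝ} {P : Ω → ℝ}
    {σM : Type*} {M : Ω → σM} {W : ∀ j, Ω → σW j} {S : ∀ i j, Ω → σS i j}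
    (hcode : IsRegenCode n k d B α β P M W S) :
    IsCodeEntropy n k d B α β
      (fun J E => entH P (fun ω => (jointW W J ω, jointS S E ω))) where
  mono hJ hE := entH_mono hcode.prob_nonneg fun ω ω' h => by
    simp only [Prod.mk.injEq, jointW_eq_iff, jointS_eq_iff] at h ⊢
    exact ⟨fun j hj => h.1 j (hJ hj), fun i j hij => h.2 i j (hE hij)⟩
  submodular J J' E E' := by
    refine entH_submodular hcode.prob_nonneg hcode.prob_sum ?_ ?_ ?_ <;> intro ω ω' <;>
      simp only [Prod.mk.injEq, jointW_eq_iff, jointS_eq_iff, mem_union, mem_inter] <;> grind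
  empty := entH_const hcode.prob_sum fun ω ω' => by
    simp [jointW_eq_iff, jointS_eq_iff]
  store j := by
    rw [← hcode.hWα j]
    exact entH_congr hcode.prob_nonneg fun ω ω' => by simp [jointW_eq_iff, jointS_eq_iff]
  message i j hij := by
    rw [← hcode.hSβ i j hij]
    refine entH_congr hcode.prob_nonneg fun ω ω' => ?_
    simp only [Prod.mk.injEq, jointW_eq_iff, jointS_eq_iff, mem_singleton]
    grind
  send i j hij := by
    have h := hcode.hSW i j hij
    rw [condH, sub_eq_zero] at h
    refine (entH_mono hcode.prob_nonneg fun ω ω' => ?_).trans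
      (h.le.trans (entH_mono hcode.prob_nonneg fun ω ω' => ?_))
    · simp only [Prod.mk.injEq, jointW_eq_iff, jointS_eq_iff, mem_singleton]
      grind
    · simp [jointW_eq_iff, jointS_eq_iff]
  repair j I hI hj := by
    have h := hcode.hWS j I hI hj
    rw [condH, sub_eq_zero] at h
    refine (entH_mono hcode.prob_nonneg fun ω ω' => ?_).trans
      (h.le.trans (entH_mono hcode.prob_nonneg fun ω ω' => ?_))
    · simp only [Prod.mk.injEq, jointW_eq_iff, jointS_eq_iff, jointSto_eq_iff, mem_singleton,
        mem_product]
      grind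
    · simp only [Prod.mk.injEq, jointW_eq_iff, jointS_eq_iff, jointSto_eq_iff, mem_singleton,
        mem_product]
      grind
  recover J hJ := by
    have h := hcode.hMW J hJ
    rw [condH, sub_eq_zero] at h
    rw [← hcode.hMB]
    refine (entH_mono hcode.prob_nonneg fun ω ω' => ?_).trans
      (h.le.trans (entH_mono hcode.prob_nonneg fun ω ω' => ?_))
    · simp only [Prod.mk.injEq]
      exact And.left
    · simp only [Prod.mk.injEq]
      exact And.left

end CodeEntropyOfCode

/-- The messages sent within `J` from later servers to earlier servers. -/
def downEdges {n : ℕ} (J : Finset (Fin n)) : Finset (Fin n × Fin n) :=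
  (J ×ˢ J).filter fun e => e.2 < e.1

lemma mem_downEdges {n : ℕ} {J : Finset (Fin n)} {e : Fin n × Fin n} :
    e ∈ downEdges J ↔ (e.1 ∈ J ∧ e.2 ∈ J) ∧ e.2 < e.1 := by
  simp [downEdges]

lemma card_downEdges_le {n : ℕ} (J : Finset (Fin n)) :
    ((downEdges J).card : ℝ) ≤ J.card * (J.card - 1) / 2 := by
  induction J using Finset.induction_on_max with
  | empty => simp [downEdges]
  | insert a J hlt ih =>
    have ha : a ∉ J := fun h => lt_irrefl a (hlt a h)
    have hsub : downEdges (insert a J) ⊆ downEdges J ∪ {a} ×ˢ J := by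
      intro e he
      simp only [mem_union, mem_downEdges, mem_product, mem_singleton, mem_insert] at he ⊢
      grind
    have h : ((downEdges (insert a J)).card : ℝ) ≤ (downEdges J).card + J.card := by
      have := (card_le_card hsub).trans (card_union_le _ _)
      rw [card_product, card_singleton, one_mul] at this
      exact_mod_cast this
    rw [card_insert_of_notMem ha]
    push_cast
    linarith

lemma Bfun_eq {k d q : ℕ} (hq : q ≤ k) (hkd : k ≤ d) (α β : ℝ) :
    Bfun k d q α β =
      q * α + (((k : ℝ) - q) * (k - q - 1) / 2 + (d + 1 - k) * (k - q)) * β := by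
  have h1 : (((k - q) * (k - q - 1) : ℕ) : ℝ) = ((k : ℝ) - q) * (k - q - 1) := by
    rcases hq.eq_or_lt with rfl | h
    · simp
    · rw [Nat.cast_mul, Nat.cast_sub (by omega : 1 ≤ k - q), Nat.cast_sub hq, Nat.cast_one]
  rw [Bfun, h1, Nat.cast_mul, Nat.cast_sub hq, Nat.cast_sub (by omega : k ≤ d + 1)]
  push_cast
  ring

namespace IsCodeEntropy

variable {n k d : ℕ} {B α β : ℝ} {F : Finset (Fin n) → Finset (Fin n × Fin n) → ℝ}

lemma nonneg (hF : IsCodeEntropy n k d B α β F) (J E) : 0 ≤ F J E :=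
  hF.empty.symm.le.trans (hF.mono (empty_subset _) (empty_subset _))

lemma submodular' (hF : IsCodeEntropy n k d B α β F) {J J' E E' U I UE IE}
    (hU : U ⊆ J ∪ J') (hUE : UE ⊆ E ∪ E') (hI : I ⊆ J ∩ J') (hIE : IE ⊆ E ∩ E') :
    F U UE + F I IE ≤ F J E + F J' E' :=
  (add_le_add (hF.mono hU hUE) (hF.mono hI hIE)).trans (hF.submodular J J' E E')

lemma subadditive (hF : IsCodeEntropy n k d B α β F) (J J' E E') :
    F (J ∪ J') (E ∪ E') ≤ F J E + F J' E' := by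
  linarith [hF.submodular J J' E E', hF.nonneg (J ∩ J') (E ∩ E')]

lemma le_card_store (hF : IsCodeEntropy n k d B α β F) (J : Finset (Fin n)) :
    F J ∅ ≤ J.card * α := by
  induction J using Finset.induction_on with
  | empty => simp [hF.empty]
  | insert a J ha ih =>
    have h := hF.subadditive {a} J ∅ ∅
    rw [← insert_eq, union_empty, hF.store] at h
    rw [card_insert_of_notMem ha]
    push_cast
    linarith

lemma le_card_message (hF : IsCodeEntropy n k d B α β F) (E : Finset (Fin n × Fin n))
    (hE : ∀ e ∈ E, e.1 ≠ e.2) : F ∅ E ≤ E.card * β := by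
  induction E using Finset.induction_on with
  | empty => simp [hF.empty]
  | insert a E ha ih =>
    have h := hF.subadditive ∅ ∅ {a} E
    have hm := hF.message a.1 a.2 (hE a (mem_insert_self a E))
    rw [← insert_eq, union_empty, hm] at h
    have := ih fun e he => hE e (mem_insert_of_mem he)
    rw [card_insert_of_notMem ha]
    push_cast
    linarith

lemma le_card (hF : IsCodeEntropy n k d B α β F) (J : Finset (Fin n))
    (E : Finset (Fin n × Fin n)) (hE : ∀ e ∈ E, e.1 ≠ e.2) :
    F J E ≤ J.card * α + E.card * β := by
  have h := hF.subadditive J ∅ ∅ E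
  rw [union_empty, empty_union] at h
  linarith [hF.le_card_store J, hF.le_card_message E hE]

/-- Messages sent by servers in `J` are determined by `W_J`. -/
lemma union_sent_le (hF : IsCodeEntropy n k d B α β F) (J : Finset (Fin n))
    (E E' : Finset (Fin n × Fin n)) (hE' : ∀ e ∈ E', e.1 ∈ J ∧ e.1 ≠ e.2) :
    F J (E ∪ E') ≤ F J E := by
  induction E' using Finset.induction_on with
  | empty => simp
  | insert e E' he ih =>
    obtain ⟨h1, h2⟩ := hE' e (mem_insert_self e E')
    have hs := hF.submodular' (J := {e.1}) (J' := J) (E := {e}) (E' := E ∪ E')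
      (U := J) (UE := E ∪ insert e E') (I := {e.1}) (IE := ∅)
      subset_union_right (by intro x; simp) (by simpa using h1) (empty_subset _)
    have := hF.send e.1 e.2 h2
    have := ih fun x hx => hE' x (mem_insert_of_mem hx)
    simp only [Prod.mk.eta] at *
    linarith

/-- A server with `d` available helper messages is determined. -/
lemma insert_repaired_le (hF : IsCodeEntropy n k d B α β F) {I J : Finset (Fin n)} {j : Fin n}
    {E : Finset (Fin n × Fin n)} (hI : d ≤ I.card) (hj : j ∉ I) (hE : I ×ˢ {j} ⊆ E) :
    F (insert j J) E ≤ F J E := by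
  have hs := hF.submodular' (J := {j}) (J' := J) (E := I ×ˢ {j}) (E' := E)
    (U := insert j J) (UE := E) (I := ∅) (IE := I ×ˢ {j})
    (by rw [insert_eq]) subset_union_right (empty_subset _) (subset_inter Subset.rfl hE)
  linarith [hF.repair j I hI hj]

/-- The servers in `R` are repaired one after the other in increasing order. -/
lemma union_repaired_le (hF : IsCodeEntropy n k d B α β F) {D : Finset (Fin n)}
    (hD : D.card = d + 1) (J R : Finset (Fin n)) (E : Finset (Fin n × Fin n)) (hR : R ⊆ D)
    (h : ∀ j ∈ R, ∀ i ∈ D, i ≠ j → i ∈ J ∨ (i ∈ R ∧ i < j) ∨ (i, j) ∈ E) :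
    F (J ∪ R) E ≤ F J E := by
  induction R using Finset.induction_on_max with
  | empty => simp
  | insert a R hlt ih =>
    have hRD : R ⊆ D := (subset_insert a R).trans hR
    have ha : a ∈ D := hR (mem_insert_self a R)
    have h1 : F (J ∪ R) E ≤ F J E := by
      refine ih hRD fun j hj i hi hij => ?_
      have hja := hlt j hj
      rcases h j (mem_insert_of_mem hj) i hi hij with h | ⟨h, h'⟩ | h
      · exact Or.inl h
      · rcases mem_insert.1 h with rfl | h
        · exact absurd h' hja.not_gt
        · exact Or.inr (Or.inl ⟨h, h'⟩)
      · exact Or.inr (Or.inr h)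
    set E' := (((D.erase a) ∩ (J ∪ R)) ×ˢ {a} : Finset (Fin n × Fin n)) with hE'
    have h2 : F (J ∪ R) (E ∪ E') ≤ F (J ∪ R) E := by
      refine hF.union_sent_le _ _ _ fun e he => ?_
      simp only [hE', mem_product, mem_inter, mem_erase, mem_singleton] at he
      exact ⟨he.1.2, he.2 ▸ he.1.1.1⟩
    have h3 : F (insert a (J ∪ R)) (E ∪ E') ≤ F (J ∪ R) (E ∪ E') := by
      refine hF.insert_repaired_le (I := D.erase a) ?_ (notMem_erase a D) ?_
      · rw [card_erase_of_mem ha, hD]; simp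
      · rintro ⟨i, j⟩ he
        simp only [mem_product, mem_erase, mem_singleton] at he
        obtain ⟨⟨hia, hi⟩, rfl⟩ := he
        have := h j (mem_insert_self j R) i hi hia
        simp only [hE', mem_union, mem_product, mem_inter, mem_erase, mem_singleton,
          mem_insert] at this ⊢
        grind
    have h4 : F (J ∪ insert a R) E ≤ F (insert a (J ∪ R)) (E ∪ E') :=
      hF.mono (by rw [union_insert]) subset_union_left
    linarith

/-- Given the servers in `C ∪ V`, few further messages suffice to recover the file. -/
lemma exists_completion (hF : IsCodeEntropy n k d B α β F) (hkd : k ≤ d)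
    {C O : Finset (Fin n)} (hCO : Disjoint C O) (hD : (C ∪ O).card = d + 1)
    {V : Finset (Fin n)} (hV : V ⊆ O) (hVk : C.card + V.card ≤ k) :
    ∃ E : Finset (Fin n × Fin n), (∀ e ∈ E, e.1 ≠ e.2) ∧
      (E.card : ℝ) ≤ ((k : ℝ) - C.card - V.card) * (k - C.card - V.card - 1) / 2
        + (d + 1 - k) * (k - C.card - V.card) ∧
      ∀ J E', C ∪ V ⊆ J → E ⊆ E' → B ≤ F J E' := by
  have hcO : O.card = d + 1 - C.card := by
    rw [card_union_of_disjoint hCO] at hD; omega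
  have hcOV : (O \ V).card = d + 1 - C.card - V.card := by
    rw [card_sdiff_of_subset hV, hcO]
  obtain ⟨R, hR, hcR⟩ := exists_subset_card_eq (s := O \ V) (n := k - C.card - V.card)
    (by omega)
  have hcY : ((O \ V) \ R).card = d + 1 - k := by
    rw [card_sdiff_of_subset hR, hcOV, hcR]; omega
  have hcR' : (R.card : ℝ) = (k : ℝ) - C.card - V.card := by
    rw [hcR, Nat.sub_sub, Nat.cast_sub hVk]; push_cast; ring
  have hcY' : (((O \ V) \ R).card : ℝ) = d + 1 - k := by
    rw [hcY, Nat.cast_sub (by omega)]; push_cast; ring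
  refine ⟨((O \ V) \ R) ×ˢ R ∪ downEdges R, ?_, ?_, ?_⟩
  · intro e he
    simp only [mem_union, mem_product, mem_sdiff, mem_downEdges] at he
    grind
  · have h : (((((O \ V) \ R) ×ˢ R ∪ downEdges R).card : ℕ) : ℝ) ≤
        ((O \ V) \ R).card * R.card + (downEdges R).card := by
      have := card_union_le (((O \ V) \ R) ×ˢ R) (downEdges R)
      rw [card_product] at this
      exact_mod_cast this
    have h' := card_downEdges_le R
    rw [hcY', hcR'] at h
    rw [hcR'] at h'
    linarith
  · intro J E' hJ hE'
    have h1 : F (J ∪ R) E' ≤ F J E' := by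
      refine hF.union_repaired_le hD J R E' ?_ fun j hj i hi hij => ?_
      · exact hR.trans (sdiff_subset.trans subset_union_right)
      · by_cases hiJ : i ∈ J
        · exact Or.inl hiJ
        · refine Or.inr ?_
          have hiCV : i ∉ C ∪ V := fun h => hiJ (hJ h)
          by_cases hlt : i ∈ R ∧ i < j
          · exact Or.inl hlt
          · refine Or.inr (hE' ?_)
            simp only [mem_union, mem_product, mem_sdiff, mem_downEdges] at *
            grind
    have h2 : B ≤ F (J ∪ R) ∅ := by
      refine hF.recover _ ?_
      have hsub : (C ∪ V) ∪ R ⊆ J ∪ R := union_subset_union_left hJ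
      have hd1 : Disjoint C V := hCO.mono_right hV
      have hd2 : Disjoint (C ∪ V) R := by
        rw [disjoint_union_left]
        exact ⟨hCO.mono_right (hR.trans sdiff_subset), disjoint_sdiff.mono_right hR⟩
      have := card_le_card hsub
      rw [card_union_of_disjoint hd2, card_union_of_disjoint hd1, hcR] at this
      omega
    exact h2.trans ((hF.mono Subset.rfl (empty_subset _)).trans h1)

section Bounds

variable {C O : Finset (Fin n)}

lemma bound_of_parts (hF : IsCodeEntropy n k d B α β F) (hkd : k ≤ d) (hβ : 0 ≤ β)
    {L K : Finset (Fin n)} (hLK : Disjoint L K) (hCO : Disjoint (L ∪ K) O)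
    (hD : ((L ∪ K) ∪ O).card = d + 1) (hk : (L ∪ K).card ≤ k) :
    B + F (L ∪ K) (O ×ˢ (L ∪ K)) ≤ Bfun k d (L ∪ K).card α β
      + (O.card * (L ∪ K).card + (L.card * (L.card - 1) / 2 + K.card * (K.card - 1) / 2)) * β := by
  have half : ∀ L K : Finset (Fin n), Disjoint L K → Disjoint (L ∪ K) O →
      ((L ∪ K) ∪ O).card = d + 1 → ∃ E, O ×ˢ K ⊆ E ∧
      F (L ∪ K) E ≤ L.card * α + (O.card * K.card + K.card * (K.card - 1) / 2) * β := by
    intro L K hLK hCO hD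
    refine ⟨O ×ˢ K ∪ downEdges K, subset_union_left, ?_⟩
    have h1 : F (L ∪ K) (O ×ˢ K ∪ downEdges K) ≤ F L (O ×ˢ K ∪ downEdges K) := by
      refine hF.union_repaired_le hD _ _ _ (subset_union_right.trans subset_union_left) ?_
      intro j hj i hi hij
      simp only [mem_union, mem_product, mem_downEdges] at *
      grind
    have h2 := hF.le_card L (O ×ˢ K ∪ downEdges K) fun e he => by
      simp only [mem_union, mem_product, mem_downEdges] at he
      rw [disjoint_left] at hCO
      grind
    have h3 : (((O ×ˢ K ∪ downEdges K).card : ℕ) : ℝ) ≤ O.card * K.card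
        + K.card * (K.card - 1) / 2 := by
      have h := card_union_le (O ×ˢ K) (downEdges K)
      rw [card_product] at h
      have h : (((O ×ˢ K ∪ downEdges K).card : ℕ) : ℝ) ≤ O.card * K.card + (downEdges K).card :=
        mod_cast h
      linarith [card_downEdges_le K]
    linarith [mul_le_mul_of_nonneg_right h3 hβ]
  obtain ⟨E₁, hE₁, h₁⟩ := half L K hLK hCO hD
  obtain ⟨E₂, hE₂, h₂⟩ := half K L hLK.symm (by rwa [union_comm K L]) (by rwa [union_comm K L])
  rw [union_comm K L] at h₂
  have hs := hF.submodular' (J := L ∪ K) (J' := L ∪ K) (E := E₁) (E' := E₂)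
    (U := L ∪ K) (UE := O ×ˢ (L ∪ K)) (I := L ∪ K) (IE := ∅) subset_union_left
    (by
      rw [product_union, union_comm]
      exact union_subset_union hE₁ hE₂) (by simp) (empty_subset _)
  obtain ⟨E, hE, hcE, hB⟩ := hF.exists_completion hkd hCO hD (V := ∅) (empty_subset _)
    (by simpa using hk)
  have h3 := hB (L ∪ K) E (by simp) Subset.rfl
  have h4 := hF.subadditive (L ∪ K) ∅ ∅ E
  rw [union_empty, empty_union] at h4
  have h5 := hF.le_card_message E hE
  have h6 := mul_le_mul_of_nonneg_right hcE hβ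
  have hc : (((L ∪ K).card : ℕ) : ℝ) = L.card + K.card := by
    rw [card_union_of_disjoint hLK]; push_cast; rfl
  rw [Bfun_eq hk hkd]
  simp only [card_empty, Nat.cast_zero, sub_zero] at h6
  rw [hc] at h6 ⊢
  nlinarith

lemma bound_of_helpers (hF : IsCodeEntropy n k d B α β F) (hkd : k ≤ d) (hβ : 0 ≤ β)
    (hCO : Disjoint C O) (hD : (C ∪ O).card = d + 1) {Q : Finset (Fin n)} (hQ : Q ⊆ O)
    (hk : C.card + Q.card ≤ k) :
    B + F ∅ (Q ×ˢ C) ≤ F C (O ×ˢ C) + Bfun k d Q.card α β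
      - ((O.card - Q.card) * C.card + C.card * (C.card - 1) / 2) * β := by
  obtain ⟨E, hE, hcE, hB⟩ := hF.exists_completion hkd hCO hD hQ hk
  have hs := hF.submodular' (J := C) (J' := Q) (E := O ×ˢ C) (E' := E ∪ Q ×ˢ C)
    (U := C ∪ Q) (UE := E) (I := ∅) (IE := Q ×ˢ C) Subset.rfl
    (subset_union_left.trans subset_union_right) (empty_subset _)
    (subset_inter (product_subset_product_left hQ) subset_union_right)
  have h1 := hB (C ∪ Q) E Subset.rfl Subset.rfl
  have h2 : F Q (E ∪ Q ×ˢ C) ≤ F Q E := by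
    refine hF.union_sent_le _ _ _ fun e he => ?_
    rw [mem_product] at he
    exact ⟨he.1, fun h => disjoint_left.1 hCO he.2 (hQ (h ▸ he.1))⟩
  have h3 := hF.le_card Q E hE
  have h4 := mul_le_mul_of_nonneg_right hcE hβ
  have hc : (O.card : ℝ) = d + 1 - C.card := by
    rw [card_union_of_disjoint hCO] at hD
    have : (C.card : ℝ) + O.card = d + 1 := mod_cast hD
    linarith
  rw [Bfun_eq (by omega) hkd, hc]
  nlinarith

lemma bound_of_inter (hF : IsCodeEntropy n k d B α β F) (hkd : k ≤ d) (hβ : 0 ≤ β)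
    (hCO : Disjoint C O) (hD : (C ∪ O).card = d + 1) {Q V : Finset (Fin n)} (hQ : Q ⊆ O)
    (hV : V ⊆ O) (hk : C.card + V.card ≤ k) :
    B + (F ∅ ((Q ∩ V) ×ˢ C) - (Q ∩ V).card * C.card * β) ≤
      (F ∅ (Q ×ˢ C) - Q.card * C.card * β) + Bfun k d V.card α β := by
  obtain ⟨E, hE, hcE, hB⟩ := hF.exists_completion hkd hCO hD hV hk
  have hVC : ∀ e ∈ V ×ˢ C, e.1 ∈ V ∧ e.1 ≠ e.2 := fun e he => by
    rw [mem_product] at he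
    exact ⟨he.1, fun h => disjoint_left.1 hCO he.2 (hV (h ▸ he.1))⟩
  obtain ⟨E₁, hE₁⟩ : ∃ E₁, E₁ = ((O \ V) \ Q) ×ˢ C ∪ (downEdges C ∪ E) := ⟨_, rfl⟩
  obtain ⟨E₂, hE₂⟩ : ∃ E₂, E₂ = Q ×ˢ C ∪ (E₁ ∪ V ×ˢ C) := ⟨_, rfl⟩
  have hs := hF.submodular' (J := ∅) (J' := V) (E := Q ×ˢ C) (E' := E₁ ∪ V ×ˢ C)
    (U := V) (UE := E₂) (I := ∅) (IE := (Q ∩ V) ×ˢ C) subset_union_right hE₂.subset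
    (empty_subset _)
    (subset_inter (product_subset_product_left inter_subset_left)
      ((product_subset_product_left inter_subset_right).trans subset_union_right))
  have h1 : F V (E₁ ∪ V ×ˢ C) ≤ F V E₁ := hF.union_sent_le _ _ _ hVC
  have h2 : F (V ∪ C) E₂ ≤ F V E₂ := by
    refine hF.union_repaired_le hD _ _ _ subset_union_left fun j hj i hi hij => ?_
    simp only [hE₁, hE₂, mem_union, mem_product, mem_sdiff, mem_downEdges] at hi ⊢
    grind
  have h3 : B ≤ F (V ∪ C) E₂ := by
    refine hB _ _ (by rw [union_comm]) ?_
    intro e he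
    simp only [hE₁, hE₂, mem_union, he, or_true, true_or]
  have h4 := hF.le_card V E₁ fun e he => by
    simp only [hE₁, mem_union, mem_product, mem_sdiff, mem_downEdges] at he
    rw [disjoint_left] at hCO
    grind
  have hc : (O.card : ℝ) = d + 1 - C.card := by
    rw [card_union_of_disjoint hCO] at hD
    have : (C.card : ℝ) + O.card = d + 1 := mod_cast hD
    linarith
  have hcOVQ : ((((O \ V) \ Q).card : ℕ) : ℝ) =
      O.card - V.card - (Q.card - (Q ∩ V).card) := by
    have e1 : (O \ V) \ Q = O \ (V ∪ Q) := sdiff_sdiff_left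
    have e2 := card_sdiff_add_card_eq_card (union_subset hV hQ)
    have e3 := card_union_add_card_inter V Q
    rw [inter_comm] at e3
    have e2' : (((O \ (V ∪ Q)).card : ℕ) : ℝ) + (V ∪ Q).card = O.card := mod_cast e2
    have e3' : ((V ∪ Q).card : ℝ) + (Q ∩ V).card = V.card + Q.card := mod_cast e3
    rw [e1]
    linarith
  have h5 : (E₁.card : ℝ) ≤ (O.card - V.card - (Q.card - (Q ∩ V).card)) * C.card
      + (C.card * (C.card - 1) / 2 + E.card) := by
    have e1 : E₁.card ≤ ((O \ V) \ Q).card * C.card + ((downEdges C).card + E.card) := by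
      rw [hE₁, ← card_product]
      exact (card_union_le _ _).trans (Nat.add_le_add_left (card_union_le _ _) _)
    have e2 : (E₁.card : ℝ) ≤ ((O \ V) \ Q).card * C.card + ((downEdges C).card + E.card) :=
      mod_cast e1
    rw [hcOVQ] at e2
    linarith [card_downEdges_le C]
  have h6 := mul_le_mul_of_nonneg_right (h5.trans (add_le_add_right
    (add_le_add_right hcE _) _)) hβ
  rw [Bfun_eq (by omega) hkd]
  rw [hc] at h6
  nlinarith

lemma bound_of_iInter (hF : IsCodeEntropy n k d B α β F) (hkd : k ≤ d) (hβ : 0 ≤ β)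
    (hCO : Disjoint C O) (hD : (C ∪ O).card = d + 1) {Q : Finset (Fin n)} (hQ : Q ⊆ O)
    {ι : Type*} (V : ι → Finset (Fin n)) (hV : ∀ i, V i ⊆ O)
    (hk : ∀ i, C.card + (V i).card ≤ k) (s : Finset ι) :
    s.card * B + (F ∅ ((Q ∩ s.inf V) ×ˢ C) - (Q ∩ s.inf V).card * C.card * β) ≤
      (F ∅ (Q ×ˢ C) - Q.card * C.card * β) + ∑ i ∈ s, Bfun k d (V i).card α β := by
  classical
  induction s using Finset.induction_on with
  | empty => simp
  | insert a s ha ih =>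
    have h := hF.bound_of_inter hkd hβ hCO hD (Q := Q ∩ s.inf V) (V := V a)
      (inter_subset_left.trans hQ) (hV a) (hk a)
    have e : Q ∩ (insert a s).inf V = Q ∩ s.inf V ∩ V a := by
      rw [inf_insert, inf_eq_inter, inter_comm (V a), inter_assoc]
    rw [e, sum_insert ha, card_insert_of_notMem ha]
    push_cast
    linarith

end Bounds

end IsCodeEntropy

lemma card_filter_le_and_lt {n a b : ℕ} (hb : b ≤ n) :
    (univ.filter fun x : Fin n => a ≤ (x : ℕ) ∧ (x : ℕ) < b).card = b - a := by
  rw [← Nat.card_Ico, ← card_map Fin.valEmbedding]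
  congr 1
  ext x
  simp only [mem_map, mem_filter, mem_univ, true_and, Fin.valEmbedding_apply, mem_Ico]
  constructor
  · rintro ⟨y, hy, rfl⟩
    exact hy
  · intro hx
    exact ⟨⟨x, hx.2.trans_le hb⟩, hx, rfl⟩

/-- first outer bound, Theorem `thm-rs`: for positive `q, ℓ, m` with
`q + ℓ + m ≤ k`, `N ≥ 3`, and subsets `V_1,…,V_{N-2}` of `{ℓ+m+1,…,d+1}` (server `t` of
the paper is index `t-1`) of sizes `q_i ≤ k - ℓ - m` with empty intersection,
`N·B ≤ B_q + Σ B_{q_i} + B_{ℓ+m} - ℓmβ`. -/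
theorem stmt_4 {Ω : Type*} [Fintype Ω] {n k d : ℕ} {B α β : ℝ} {P : Ω → ℝ}
    {σM : Type*} {σW : Fin n → Type*} {σS : Fin n → Fin n → Type*}
    {M : Ω → σM} {W : ∀ j, Ω → σW j} {S : ∀ i j, Ω → σS i j}
    (hcode : IsRegenCode n k d B α β P M W S)
    (q ℓ m : ℕ) (hq : 1 ≤ q) (hℓ : 1 ≤ ℓ) (hm : 1 ≤ m) (hqlm : q + ℓ + m ≤ k)
    (N : ℕ) (hN : 3 ≤ N)
    (V : Fin (N - 2) → Finset (Fin n))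
    (hVsub : ∀ i, V i ⊆ Finset.univ.filter (fun x : Fin n => ℓ + m ≤ (x : ℕ) ∧ (x : ℕ) < d + 1))
    (hVcard : ∀ i, 1 ≤ (V i).card ∧ (V i).card ≤ k - ℓ - m)
    (hVinter : Finset.univ.inf V = ∅) :
    (N : ℝ) * B ≤ Bfun k d q α β + ∑ i, Bfun k d (V i).card α β
      + Bfun k d (ℓ + m) α β - (ℓ : ℝ) * (m : ℝ) * β := by
  have hkd := hcode.hkd
  have hdn := hcode.hdn
  have hβ := hcode.hβ
  have hF := hcode.isCodeEntropy
  obtain ⟨L, hL⟩ : ∃ L : Finset (Fin n),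
    L = univ.filter fun x : Fin n => 0 ≤ (x : ℕ) ∧ (x : ℕ) < ℓ := ⟨_, rfl⟩
  obtain ⟨K, hK⟩ : ∃ K : Finset (Fin n),
    K = univ.filter fun x : Fin n => ℓ ≤ (x : ℕ) ∧ (x : ℕ) < ℓ + m := ⟨_, rfl⟩
  obtain ⟨O, hO⟩ : ∃ O : Finset (Fin n),
    O = univ.filter fun x : Fin n => ℓ + m ≤ (x : ℕ) ∧ (x : ℕ) < d + 1 := ⟨_, rfl⟩
  have hcL : L.card = ℓ := by rw [hL, card_filter_le_and_lt (by omega)]; omega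
  have hcK : K.card = m := by rw [hK, card_filter_le_and_lt (by omega)]; omega
  have hcO : O.card = d + 1 - (ℓ + m) := by rw [hO, card_filter_le_and_lt (by omega)]
  have hLK : Disjoint L K := by
    rw [disjoint_left, hL, hK]
    intro x
    simp only [mem_filter, mem_univ, true_and]
    omega
  have hCO : Disjoint (L ∪ K) O := by
    rw [disjoint_left, hL, hK, hO]
    intro x
    simp only [mem_union, mem_filter, mem_univ, true_and]
    omega
  have hcC : (L ∪ K).card = ℓ + m := by rw [card_union_of_disjoint hLK, hcL, hcK]
  have hD : ((L ∪ K) ∪ O).card = d + 1 := by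
    rw [card_union_of_disjoint hCO, hcC, hcO]; omega
  obtain ⟨Q, hQ, hcQ⟩ := exists_subset_card_eq (s := O) (n := q) (by omega)
  have h1 := hF.bound_of_parts hkd hβ hLK hCO hD (by omega)
  have h2 := hF.bound_of_helpers hkd hβ hCO hD hQ (by omega)
  have h3 := hF.bound_of_iInter hkd hβ hCO hD hQ V (fun i => hO ▸ hVsub i)
    (fun i => by have := (hVcard i).2; omega) univ
  have h4 := hF.nonneg ∅ ∅
  rw [hVinter, inter_empty, empty_product, card_univ, Fintype.card_fin,
    Nat.cast_sub (by omega : 2 ≤ N)] at h3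
  simp only [hcC, hcQ, hcL, hcK, card_empty] at h1 h2 h3 h4
  push_cast at h1 h2 h3
  linarith
end
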